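/- Let n ≥ 3 be an integer. Let h ∈ C¹(ℝ) be a positive function satisfying: (i) lim_{τ→+∞} h'(τ)/h(τ) = 0; (ii) for every function ε : ℝ → ℝ with lim_{τ→+∞} ε(τ) = 0, one has lim_{τ→+∞} h(τ + (1/(n−1))log h(τ) + (1/(n−1))log((n−1)/(n−2)) + ε(τ)) / h(τ) = 1; and (iii) ∫₁^∞ dτ/h(τ) = +∞. Let ρ ∈ ℬ satisfy lim_{s→+∞} s ρ'(s)/ρ(s) = −2 and ρ(s) ∼ ((n−2)/(n−1))² / ( s² · [h( ((n−2)/(n−1)) log s )]² ) as s → +∞. Define r = g(s) := ∫₀^s ρ(τ)^{1/2} dτ for s ≥ 0 (an increasing bijection of [0,∞) onto [0,∞)), and ψ(r) := g^{−1}(r) · ρ(g^{−1}(r))^{1/(2(n−1))} for r > 0. Then ψ ∈ 𝒜, lim_{r→+∞} ψ(r) = +∞, and lim_{r→+∞} (log ψ)'(r) / h(log ψ(r)) = 1. -/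

import Mathlib

/-- The class `𝒜` of model functions: `ψ ∈ C^∞((0,∞)) ∩ C¹([0,∞))` with `ψ(0) = 0`,
`ψ'(0) = 1` (one-sided derivative) and `ψ > 0` on `(0,∞)`. -/
def classA (ψ : ℝ → ℝ) : Prop :=
  ContDiffOn ℝ (⊤ : ℕ∞) ψ (Set.Ioi 0) ∧ ContDiffOn ℝ 1 ψ (Set.Ici 0) ∧
  ψ 0 = 0 ∧ derivWithin ψ (Set.Ici 0) 0 = 1 ∧ ∀ r > (0 : ℝ), 0 < ψ r

/-- The class `ℬ` of weights: `ρ ∈ C^∞((0,∞))`, positive, extending continuously to `0`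
with value `1`, and with `s ρ'(s) → 0` as `s → 0⁺`. -/
def classB (ρ : ℝ → ℝ) : Prop :=
  ContDiffOn ℝ (⊤ : ℕ∞) ρ (Set.Ioi 0) ∧
  Filter.Tendsto ρ (nhdsWithin 0 (Set.Ioi 0)) (nhds 1) ∧
  Filter.Tendsto (fun s => s * deriv ρ s) (nhdsWithin 0 (Set.Ioi 0)) (nhds 0) ∧
  ∀ s > (0 : ℝ), 0 < ρ s

/-!
Put `k = 1 / (n - 1)`, `c = 1 - k`, `f(τ) = k log (h(τ) / c)` and `t = c log s`. Property (ii)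
with `ε = 0` says `f(x + f(x)) - f(x) → 0`, while the asymptotics of `ρ` say that
`φ(s) = s ρ(s)^(k/2)` satisfies `log φ = t - f(t) + o(1)`. Since `f' = k h'/h → 0`, the shift
`x ↦ x + f(x)` can be inverted up to `o(1)`, which gives `h(log φ) ∼ h(t)`.

On the other hand `s φ'/φ → c` and `s √ρ h(t) → c`, so that `φ' / (φ √ρ) ∼ h(t) ∼ h(log φ)`, and
the left-hand side is `(log ψ)'` at `r = g(s)`. Moreover `√ρ ds ∼ dτ / h(τ)` for `τ = c log s`, so
the divergence of `∫ dτ / h(τ)` makes `g` onto.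
-/

open Set Filter Topology MeasureTheory Asymptotics

section SlowVariation

theorem tendsto_sub_comp_of_isBoundedUnder_deriv {ι E : Type*} [NormedAddCommGroup E]
    [NormedSpace ℝ E] {l : Filter ι} {f : ℝ → E} {u v : ι → ℝ} (hf : Differentiable ℝ f)
    (hf' : IsBoundedUnder (· ≤ ·) atTop fun x => ‖deriv f x‖) (hu : Tendsto u l atTop)
    (hv : Tendsto v l atTop) (huv : Tendsto (fun i => u i - v i) l (𝓝 0)) :
    Tendsto (fun i => f (u i) - f (v i)) l (𝓝 0) := by
  obtain ⟨C, hC⟩ := hf'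
  obtain ⟨x₀, hx₀⟩ := eventually_atTop.1 (eventually_map.1 hC)
  refine squeeze_zero_norm' ?_ (by simpa using huv.norm.const_mul C)
  filter_upwards [hu.eventually_ge_atTop x₀, hv.eventually_ge_atTop x₀] with i hui hvi
  exact (convex_Ici x₀).norm_image_sub_le_of_norm_deriv_le (fun x _ => hf x) hx₀ hvi hui

theorem tendsto_atTop_of_eventually_le_deriv {f : ℝ → ℝ} {m : ℝ} (hf : Differentiable ℝ f)
    (hm : 0 < m) (hf' : ∀ᶠ x in atTop, m ≤ deriv f x) : Tendsto f atTop atTop := by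
  obtain ⟨x₀, hx₀⟩ := eventually_atTop.1 hf'
  have hline : Tendsto (fun x => f x₀ + m * (x - x₀)) atTop atTop :=
    tendsto_atTop_add_const_left _ _
      ((tendsto_atTop_add_const_right _ (-x₀) tendsto_id).const_mul_atTop hm)
  refine tendsto_atTop_mono' _ ?_ hline
  filter_upwards [eventually_ge_atTop x₀] with x hx
  have := (convex_Ici x₀).mul_sub_le_image_sub_of_le_deriv hf.continuous.continuousOn
    hf.differentiableOn (fun y hy => hx₀ y (interior_subset hy)) x₀ self_mem_Ici x hx hx
  linarith

theorem tendsto_add_self_atTop_of_tendsto_deriv_zero {f : ℝ → ℝ} (hf : Differentiable ℝ f)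
    (hf' : Tendsto (deriv f) atTop (𝓝 0)) : Tendsto (fun x => x + f x) atTop atTop := by
  refine tendsto_atTop_of_eventually_le_deriv (m := 1 / 2) (differentiable_id.add hf)
    (by norm_num) ?_
  filter_upwards [hf'.eventually_const_le (show (-1 / 2 : ℝ) < 0 by norm_num)] with x hx
  rw [((hasDerivAt_id' x).fun_add (hf x).hasDerivAt).deriv]
  linarith

theorem tendsto_sub_self_atTop_of_tendsto_deriv_zero {f : ℝ → ℝ} (hf : Differentiable ℝ f)
    (hf' : Tendsto (deriv f) atTop (𝓝 0)) : Tendsto (fun x => x - f x) atTop atTop := by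
  have hneg : Tendsto (deriv fun x => -f x) atTop (𝓝 0) := by
    simpa only [deriv.fun_neg', neg_zero] using hf'.neg
  simpa only [sub_eq_add_neg] using tendsto_add_self_atTop_of_tendsto_deriv_zero hf.fun_neg hneg

theorem map_atTop_eq_of_continuous_of_tendsto {α β : Type*} [ConditionallyCompleteLinearOrder α]
    [TopologicalSpace α] [OrderTopology α] [DenselyOrdered α] [Nonempty α] [LinearOrder β]
    [TopologicalSpace β] [OrderClosedTopology β] {F : α → β} (hF : Continuous F)
    (htop : Tendsto F atTop atTop) : map F atTop = atTop := by
  refine le_antisymm htop fun s hs => ?_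
  obtain ⟨a, ha⟩ := mem_atTop_sets.1 (mem_map.1 hs)
  have himage : Ici (F a) ⊆ F '' Ici a :=
    isPreconnected_Ici.intermediate_value_Ici self_mem_Ici
      (le_principal_iff.2 (Ici_mem_atTop a)) hF.continuousOn htop
  refine mem_of_superset (Ici_mem_atTop (F a)) (himage.trans ?_)
  exact image_subset_iff.2 ha

/- `x ↦ x + f x` maps a neighbourhood of `+∞` onto a neighbourhood of `+∞`, so it is enough to
prove the limit along `t = x + f x`, where `t - f t = x - (f (x + f x) - f x) = x + o(1)`. -/
theorem tendsto_comp_sub_self_sub {f : ℝ → ℝ} (hf : Differentiable ℝ f)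
    (hf' : Tendsto (deriv f) atTop (𝓝 0))
    (hadd : Tendsto (fun x => f (x + f x) - f x) atTop (𝓝 0)) :
    Tendsto (fun t => f (t - f t) - f t) atTop (𝓝 0) := by
  have htop := tendsto_add_self_atTop_of_tendsto_deriv_zero hf hf'
  rw [← map_atTop_eq_of_continuous_of_tendsto (continuous_id'.fun_add hf.continuous) htop,
    tendsto_map'_iff]
  have hbase : Tendsto (fun x => x + f x - f (x + f x) - x) atTop (𝓝 0) := by
    have hneg := hadd.neg
    rw [neg_zero] at hneg
    exact hneg.congr fun x => by ring
  have hslow : Tendsto (fun x => f (x + f x - f (x + f x)) - f x) atTop (𝓝 0) :=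
    tendsto_sub_comp_of_isBoundedUnder_deriv hf hf'.norm.isBoundedUnder_le
      ((tendsto_sub_self_atTop_of_tendsto_deriv_zero hf hf').comp htop) tendsto_id hbase
  simpa only [Function.comp_def, sub_sub_sub_cancel_right, sub_zero] using hslow.sub hadd

theorem tendsto_comp_sub_comp_of_tendsto_sub_sub_self {ι : Type*} {l : Filter ι} {f : ℝ → ℝ}
    {t u : ι → ℝ} (hf : Differentiable ℝ f) (hf' : Tendsto (deriv f) atTop (𝓝 0))
    (hadd : Tendsto (fun x => f (x + f x) - f x) atTop (𝓝 0)) (ht : Tendsto t l atTop)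
    (hut : Tendsto (fun i => u i - (t i - f (t i))) l (𝓝 0)) :
    Tendsto u l atTop ∧ Tendsto (fun i => f (u i) - f (t i)) l (𝓝 0) := by
  have hsub : Tendsto (fun i => t i - f (t i)) l atTop :=
    (tendsto_sub_self_atTop_of_tendsto_deriv_zero hf hf').comp ht
  have hu : Tendsto u l atTop := by
    simpa using hut.add_atTop hsub
  refine ⟨hu, ?_⟩
  have hslow := tendsto_sub_comp_of_isBoundedUnder_deriv hf hf'.norm.isBoundedUnder_le hu hsub hut
  simpa using hslow.add ((tendsto_comp_sub_self_sub hf hf' hadd).comp ht)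

end SlowVariation

section Divergence

theorem tendsto_atTop_of_monotone_of_not_integrableAtFilter {F q : ℝ → ℝ} (hF : Monotone F)
    (hdiff : ∀ᶠ x in atTop, DifferentiableAt ℝ F x) (hqF : q =O[atTop] deriv F)
    (hqm : StronglyMeasurableAtFilter q atTop) (hq : ¬ IntegrableAtFilter q atTop) :
    Tendsto F atTop atTop := by
  refine (tendsto_atTop_of_monotone hF).resolve_right fun ⟨L, hL⟩ => hq ?_
  obtain ⟨x₀, hx₀⟩ := eventually_atTop.1 hdiff
  have hderiv : IntegrableOn (deriv F) (Ioi x₀) :=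
    integrableOn_Ioi_deriv_of_nonneg' (fun x hx => (hx₀ x hx).hasDerivAt)
      (fun _ _ => hF.deriv_nonneg) hL
  exact hqF.integrableAtFilter hqm ⟨Ioi x₀, Ioi_mem_atTop x₀, hderiv⟩

theorem not_integrableAtFilter_atTop_of_continuous {E : Type*} [NormedAddCommGroup E]
    {q : ℝ → E} {a : ℝ} (hq : Continuous q) (hint : ¬ IntegrableOn q (Ioi a)) :
    ¬ IntegrableAtFilter q atTop := fun h =>
  hint ((integrableOn_Ici_iff_integrableAtFilter_atTop.2
    ⟨h, hq.locallyIntegrable.locallyIntegrableOn _⟩).mono_set Ioi_subset_Ici_self)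

end Divergence

section PrimitiveFromSingularEndpoint

variable {E : Type*} [NormedAddCommGroup E] {w : ℝ → E} {a b : ℝ} {y : E}

theorem intervalIntegrable_of_continuousOn_Ioi_of_tendsto (hab : a ≤ b)
    (hw : ContinuousOn w (Ioi a)) (hy : Tendsto w (𝓝[>] a) (𝓝 y)) :
    IntervalIntegrable w volume a b := by
  have hupdate : ContinuousOn (Function.update w a y) (Ici a) := by
    simpa [continuousOn_update_iff] using ⟨hw, hy⟩
  refine ((hupdate.mono Icc_subset_Ici_self).intervalIntegrable_of_Icc hab).congr fun x hx => ?_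
  rw [uIoc_of_le hab] at hx
  exact Function.update_of_ne hx.1.ne' _ _

variable [NormedSpace ℝ E]

theorem continuousOn_primitive_Ici_of_tendsto (hw : ContinuousOn w (Ioi a))
    (hy : Tendsto w (𝓝[>] a) (𝓝 y)) : ContinuousOn (fun s => ∫ τ in a..s, w τ) (Ici a) := by
  intro s hs
  have hs' : a ≤ s + 1 := by linarith [mem_Ici.1 hs]
  have hIcc := intervalIntegral.continuousOn_primitive_interval'
    (intervalIntegrable_of_continuousOn_Ioi_of_tendsto hs' hw hy) left_mem_uIcc
  rw [uIcc_of_le hs'] at hIcc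
  refine (hIcc s ⟨hs, by linarith⟩).mono_of_mem_nhdsWithin ?_
  rw [← Ici_inter_Iic]
  exact inter_mem_nhdsWithin _ (Iic_mem_nhds (by linarith))

theorem hasDerivAt_primitive_of_continuousOn_Ioi [CompleteSpace E] (hab : a < b)
    (hw : ContinuousOn w (Ioi a)) (hy : Tendsto w (𝓝[>] a) (𝓝 y)) :
    HasDerivAt (fun s => ∫ τ in a..s, w τ) (w b) b :=
  intervalIntegral.integral_hasDerivAt_right
    (intervalIntegrable_of_continuousOn_Ioi_of_tendsto hab.le hw hy)
    (hw.stronglyMeasurableAtFilter isOpen_Ioi b hab) (hw.continuousAt (Ioi_mem_nhds hab))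

theorem strictMonoOn_primitive_Ici {w : ℝ → ℝ} {a y : ℝ} (hw : ContinuousOn w (Ioi a))
    (hy : Tendsto w (𝓝[>] a) (𝓝 y)) (hpos : ∀ s > a, 0 < w s) :
    StrictMonoOn (fun s => ∫ τ in a..s, w τ) (Ici a) := by
  refine strictMonoOn_of_deriv_pos (convex_Ici a) (continuousOn_primitive_Ici_of_tendsto hw hy) ?_
  intro s hs
  rw [interior_Ici] at hs
  rw [(hasDerivAt_primitive_of_continuousOn_Ioi hs hw hy).deriv]
  exact hpos s hs

end PrimitiveFromSingularEndpoint

section InverseFunctions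

theorem contDiffAt_of_local_left_inverse {𝕜 : Type*} [RCLike 𝕜] {f g : 𝕜 → 𝕜} {a : 𝕜}
    {n : WithTop ℕ∞} (hf : ContDiffAt 𝕜 n f a) (hn : n ≠ 0) (hf' : deriv f a ≠ 0)
    (hg : ∀ᶠ x in 𝓝 a, g (f x) = x) : ContDiffAt 𝕜 n g (f a) := by
  have hderiv : HasStrictDerivAt f (deriv f a) a := hf.hasStrictDerivAt hn
  have hequiv : HasStrictFDerivAt f
      (ContinuousLinearEquiv.unitsEquivAut 𝕜 (Units.mk0 _ hf') : 𝕜 →L[𝕜] 𝕜) a :=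
    hderiv.hasStrictFDerivAt_equiv hf'
  exact (hf.to_localInverse hequiv.hasFDerivAt hn).congr_of_eventuallyEq
    (hequiv.localInverse_unique hg)

theorem bijOn_Ici_of_strictMonoOn {α β : Type*} [ConditionallyCompleteLinearOrder α]
    [TopologicalSpace α] [OrderTopology α] [DenselyOrdered α] [LinearOrder β]
    [TopologicalSpace β] [OrderClosedTopology β] {g : α → β} {a : α}
    (hmono : StrictMonoOn g (Ici a)) (hcont : ContinuousOn g (Ici a))
    (htop : Tendsto g atTop atTop) : BijOn g (Ici a) (Ici (g a)) := by
  have : Nonempty α := ⟨a⟩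
  exact ⟨fun x hx => hmono.monotoneOn self_mem_Ici hx hx, hmono.injOn,
    isPreconnected_Ici.intermediate_value_Ici self_mem_Ici
      (le_principal_iff.2 (Ici_mem_atTop a)) hcont htop⟩

variable {α β : Type*} [LinearOrder α]

theorem strictMonoOn_of_rightInvOn [Preorder β] {g : α → β} {gInv : β → α} {s : Set α} {t : Set β}
    (hg : StrictMonoOn g s) (hinv : RightInvOn gInv g t) (hmaps : MapsTo gInv t s) :
    StrictMonoOn gInv t := fun x hx y hy hxy => by
  rwa [← hg.lt_iff_lt (hmaps hx) (hmaps hy), hinv hx, hinv hy]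

variable [LinearOrder β] {f : α → β} {a : α} {b : β}

theorem apply_eq_of_bijOn_Ici (hf : MonotoneOn f (Ici a)) (hbij : BijOn f (Ici a) (Ici b)) :
    f a = b := by
  obtain ⟨x, hx, hxb⟩ := hbij.surjOn self_mem_Ici
  exact le_antisymm (hxb ▸ hf self_mem_Ici hx hx) (hbij.mapsTo self_mem_Ici)

theorem tendsto_atTop_of_monotoneOn_of_surjOn (hf : MonotoneOn f (Ici a))
    (hsurj : SurjOn f (Ici a) (Ici b)) : Tendsto f atTop atTop := by
  refine tendsto_atTop.2 fun y => ?_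
  obtain ⟨x, hx, hxy⟩ := hsurj (le_max_left b y)
  filter_upwards [eventually_ge_atTop x] with z hz
  exact (le_max_right b y).trans (hxy ▸ hf hx (hx.trans hz) hz)

theorem tendsto_nhdsGT_of_strictMonoOn_of_bijOn [TopologicalSpace α] [OrderTopology α]
    [TopologicalSpace β] [OrderTopology β] (hf : StrictMonoOn f (Ici a))
    (hbij : BijOn f (Ici a) (Ici b)) : Tendsto f (𝓝[>] a) (𝓝[>] b) := by
  obtain rfl := apply_eq_of_bijOn_Ici hf.monotoneOn hbij
  have hcont : ContinuousWithinAt f (Ici a) a :=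
    hf.continuousWithinAt_right_of_surjOn self_mem_nhdsWithin
      (hbij.surjOn.mono Subset.rfl Ioi_subset_Ici_self)
  exact (hcont.mono Ioi_subset_Ici_self).tendsto_nhdsWithin
    fun x hx => hf self_mem_Ici (le_of_lt hx) hx

end InverseFunctions

section OneSidedExtension

variable {E : Type*} [NormedAddCommGroup E] [NormedSpace ℝ E] {f : ℝ → E} {a : ℝ} {m : E}

theorem contDiffOn_one_Ici_of_tendsto_deriv (hf : ContDiffOn ℝ 1 f (Ioi a))
    (hcont : ContinuousWithinAt f (Ioi a) a) (hf' : Tendsto (deriv f) (𝓝[>] a) (𝓝 m)) :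
    ContDiffOn ℝ 1 f (Ici a) := by
  have ha : HasDerivWithinAt f m (Ici a) a := hasDerivWithinAt_Ici_of_tendsto_deriv
    (hf.differentiableOn one_ne_zero) hcont self_mem_nhdsWithin hf'
  have hpos : ∀ x > a, DifferentiableAt ℝ f x := fun x hx =>
    (hf.contDiffAt (Ioi_mem_nhds hx)).differentiableAt one_ne_zero
  have hderiv : EqOn (derivWithin f (Ici a)) (Function.update (deriv f) a m) (Ici a) := by
    intro x hx
    rcases (mem_Ici.1 hx).eq_or_lt with rfl | hx
    · rw [ha.derivWithin (uniqueDiffOn_Ici a a self_mem_Ici), Function.update_self]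
    · rw [derivWithin_of_mem_nhds (Ici_mem_nhds hx), Function.update_of_ne hx.ne']
  refine (contDiffOn_one_iff_derivWithin (uniqueDiffOn_Ici a)).2 ⟨fun x hx => ?_, ?_⟩
  · rcases (mem_Ici.1 hx).eq_or_lt with rfl | hx
    · exact ha.differentiableWithinAt
    · exact (hpos x hx).differentiableWithinAt
  · refine ContinuousOn.congr ?_ hderiv
    simpa [continuousOn_update_iff] using
      ⟨hf.continuousOn_deriv_of_isOpen isOpen_Ioi le_rfl, hf'⟩

end OneSidedExtension

section Profile

/-- The model function `ψ = warpingProfile ρ a ∘ g⁻¹` read in the variable `s = g⁻¹(r)`;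
the exponent is `a = 1 / (2(n - 1))`. -/
noncomputable def warpingProfile (ρ : ℝ → ℝ) (a s : ℝ) : ℝ := s * ρ s ^ a

/-- The change of variable `r = g(s)` of the weight `ρ`. -/
noncomputable def radialLength (ρ : ℝ → ℝ) (s : ℝ) : ℝ := ∫ τ in (0 : ℝ)..s, √(ρ τ)

theorem warpingProfile_pos {ρ : ℝ → ℝ} {s : ℝ} (a : ℝ) (hs : 0 < s) (hρ : 0 < ρ s) :
    0 < warpingProfile ρ a s :=
  mul_pos hs (Real.rpow_pos_of_pos hρ a)

theorem log_warpingProfile {ρ : ℝ → ℝ} {s : ℝ} (a : ℝ) (hs : 0 < s) (hρ : 0 < ρ s) :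
    Real.log (warpingProfile ρ a s) = Real.log s + a * Real.log (ρ s) := by
  rw [warpingProfile, Real.log_mul hs.ne' (Real.rpow_pos_of_pos hρ a).ne', Real.log_rpow hρ]

theorem hasDerivAt_warpingProfile {ρ : ℝ → ℝ} {s : ℝ} (a : ℝ) (hρ : ρ s ≠ 0)
    (hd : DifferentiableAt ℝ ρ s) :
    HasDerivAt (warpingProfile ρ a) (ρ s ^ a * (1 + a * (s * deriv ρ s / ρ s))) s := by
  refine ((hasDerivAt_id' s).fun_mul
    (hd.hasDerivAt.rpow_const (p := a) (Or.inl hρ))).congr_deriv ?_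
  rw [Real.rpow_sub_one hρ]
  field_simp

theorem tendsto_warpingProfile_zero {ρ : ℝ → ℝ} (a : ℝ) (hρ : Tendsto ρ (𝓝[>] 0) (𝓝 1)) :
    Tendsto (warpingProfile ρ a) (𝓝[>] 0) (𝓝 0) := by
  have hid : Tendsto (fun s : ℝ => s) (𝓝[>] 0) (𝓝 0) := nhdsWithin_le_nhds
  have hlim := hid.mul (hρ.rpow_const (p := a) (Or.inl one_ne_zero))
  rwa [zero_mul] at hlim

theorem classA_of_tendsto {ψ : ℝ → ℝ} (hsmooth : ContDiffOn ℝ (⊤ : ℕ∞) ψ (Ioi 0))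
    (hzero : ψ 0 = 0) (hlim : Tendsto ψ (𝓝[>] 0) (𝓝 0))
    (hderiv : Tendsto (deriv ψ) (𝓝[>] 0) (𝓝 1)) (hpos : ∀ r > 0, 0 < ψ r) : classA ψ := by
  have hcont : ContinuousWithinAt ψ (Ioi 0) 0 := by rwa [ContinuousWithinAt, hzero]
  have hC1 : ContDiffOn ℝ 1 ψ (Ioi 0) := hsmooth.of_le (mod_cast le_top)
  have hderiv₀ : HasDerivWithinAt ψ 1 (Ici 0) 0 := hasDerivWithinAt_Ici_of_tendsto_deriv
    (hC1.differentiableOn one_ne_zero) hcont self_mem_nhdsWithin hderiv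
  exact ⟨hsmooth, contDiffOn_one_Ici_of_tendsto_deriv hC1 hcont hderiv, hzero,
    hderiv₀.derivWithin (uniqueDiffOn_Ici 0 0 self_mem_Ici), hpos⟩

end Profile

namespace classB

variable {ρ : ℝ → ℝ}

theorem contDiffOn (hρ : classB ρ) : ContDiffOn ℝ (⊤ : ℕ∞) ρ (Ioi 0) := hρ.1

theorem tendsto_one (hρ : classB ρ) : Tendsto ρ (𝓝[>] 0) (𝓝 1) := hρ.2.1

theorem tendsto_mul_deriv (hρ : classB ρ) :
    Tendsto (fun s => s * deriv ρ s) (𝓝[>] 0) (𝓝 0) := hρ.2.2.1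

theorem pos (hρ : classB ρ) {s : ℝ} (hs : 0 < s) : 0 < ρ s := hρ.2.2.2 s hs

theorem differentiableAt (hρ : classB ρ) {s : ℝ} (hs : 0 < s) : DifferentiableAt ℝ ρ s :=
  (hρ.contDiffOn.contDiffAt (Ioi_mem_nhds hs)).differentiableAt (by simp)

theorem contDiffOn_sqrt (hρ : classB ρ) : ContDiffOn ℝ (⊤ : ℕ∞) (fun s => √(ρ s)) (Ioi 0) :=
  hρ.contDiffOn.sqrt fun _ hs => (hρ.pos hs).ne'

theorem tendsto_sqrt (hρ : classB ρ) : Tendsto (fun s => √(ρ s)) (𝓝[>] 0) (𝓝 1) := by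
  simpa only [Real.sqrt_one] using hρ.tendsto_one.sqrt

theorem contDiffOn_warpingProfile (hρ : classB ρ) (a : ℝ) :
    ContDiffOn ℝ (⊤ : ℕ∞) (warpingProfile ρ a) (Ioi 0) :=
  contDiffOn_id.mul (hρ.contDiffOn.rpow_const_of_ne fun _ hs => (hρ.pos hs).ne')

theorem deriv_warpingProfile (hρ : classB ρ) (a : ℝ) {s : ℝ} (hs : 0 < s) :
    deriv (warpingProfile ρ a) s = ρ s ^ a * (1 + a * (s * deriv ρ s / ρ s)) :=
  (hasDerivAt_warpingProfile a (hρ.pos hs).ne' (hρ.differentiableAt hs)).deriv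

theorem tendsto_deriv_warpingProfile (hρ : classB ρ) (a : ℝ) :
    Tendsto (deriv (warpingProfile ρ a)) (𝓝[>] 0) (𝓝 1) := by
  have hlim := (hρ.tendsto_one.rpow_const (p := a) (Or.inl one_ne_zero)).mul
    (((hρ.tendsto_mul_deriv.div hρ.tendsto_one one_ne_zero).const_mul a).const_add 1)
  simp only [Real.one_rpow, zero_div, mul_zero, add_zero, mul_one] at hlim
  refine hlim.congr' ?_
  filter_upwards [self_mem_nhdsWithin] with s hs
  exact (hρ.deriv_warpingProfile a hs).symm

theorem tendsto_warpingProfile_atTop (hρ : classB ρ) {a : ℝ}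
    (hlog : Tendsto (fun s => Real.log (warpingProfile ρ a s)) atTop atTop) :
    Tendsto (warpingProfile ρ a) atTop atTop := by
  refine tendsto_atTop_mono' _ ?_ hlog
  filter_upwards [eventually_gt_atTop 0] with s hs
  exact Real.log_le_self (warpingProfile_pos a hs (hρ.pos hs)).le

theorem continuousOn_radialLength (hρ : classB ρ) : ContinuousOn (radialLength ρ) (Ici 0) :=
  continuousOn_primitive_Ici_of_tendsto hρ.contDiffOn_sqrt.continuousOn hρ.tendsto_sqrt

theorem strictMonoOn_radialLength (hρ : classB ρ) : StrictMonoOn (radialLength ρ) (Ici 0) :=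
  strictMonoOn_primitive_Ici hρ.contDiffOn_sqrt.continuousOn hρ.tendsto_sqrt
    fun _ hs => Real.sqrt_pos.2 (hρ.pos hs)

theorem hasDerivAt_radialLength (hρ : classB ρ) {s : ℝ} (hs : 0 < s) :
    HasDerivAt (radialLength ρ) (√(ρ s)) s :=
  hasDerivAt_primitive_of_continuousOn_Ioi hs hρ.contDiffOn_sqrt.continuousOn hρ.tendsto_sqrt

theorem contDiffOn_radialLength (hρ : classB ρ) :
    ContDiffOn ℝ (⊤ : ℕ∞) (radialLength ρ) (Ioi 0) := by
  refine (contDiffOn_infty_iff_deriv_of_isOpen isOpen_Ioi).2 ⟨fun s hs =>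
    (hρ.hasDerivAt_radialLength hs).differentiableAt.differentiableWithinAt, ?_⟩
  exact hρ.contDiffOn_sqrt.congr fun s hs => (hρ.hasDerivAt_radialLength hs).deriv

theorem bijOn_radialLength (hρ : classB ρ) (htop : Tendsto (radialLength ρ) atTop atTop) :
    BijOn (radialLength ρ) (Ici 0) (Ici 0) := by
  have hzero : radialLength ρ 0 = 0 := intervalIntegral.integral_same
  simpa only [hzero] using
    bijOn_Ici_of_strictMonoOn hρ.strictMonoOn_radialLength hρ.continuousOn_radialLength htop

section Inverse

variable {gInv : ℝ → ℝ} (hρ : classB ρ) (hbij : BijOn (radialLength ρ) (Ici 0) (Ici 0))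
  (hinv : InvOn gInv (radialLength ρ) (Ici 0) (Ici 0))
include hρ hbij hinv

theorem strictMonoOn_radialInverse : StrictMonoOn gInv (Ici 0) :=
  strictMonoOn_of_rightInvOn hρ.strictMonoOn_radialLength hinv.2 (hbij.symm hinv.symm).mapsTo

theorem radialInverse_zero : gInv 0 = 0 :=
  apply_eq_of_bijOn_Ici (hρ.strictMonoOn_radialInverse hbij hinv).monotoneOn
    (hbij.symm hinv.symm)

theorem radialInverse_pos {r : ℝ} (hr : 0 < r) : 0 < gInv r :=
  hρ.radialInverse_zero hbij hinv ▸
    hρ.strictMonoOn_radialInverse hbij hinv self_mem_Ici hr.le hr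

theorem tendsto_radialInverse_zero : Tendsto gInv (𝓝[>] 0) (𝓝[>] 0) :=
  tendsto_nhdsGT_of_strictMonoOn_of_bijOn (hρ.strictMonoOn_radialInverse hbij hinv)
    (hbij.symm hinv.symm)

theorem tendsto_radialInverse_atTop : Tendsto gInv atTop atTop :=
  tendsto_atTop_of_monotoneOn_of_surjOn (hρ.strictMonoOn_radialInverse hbij hinv).monotoneOn
    (hbij.symm hinv.symm).surjOn

theorem eventually_radialInverse_radialLength {r : ℝ} (hr : 0 < r) :
    ∀ᶠ s in 𝓝 (gInv r), gInv (radialLength ρ s) = s := by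
  filter_upwards [Ioi_mem_nhds (hρ.radialInverse_pos hbij hinv hr)] with s hs
  exact hinv.1 (mem_Ioi.1 hs).le

theorem hasDerivAt_radialInverse {r : ℝ} (hr : 0 < r) :
    HasDerivAt gInv (√(ρ (gInv r)))⁻¹ r := by
  have hs := hρ.radialInverse_pos hbij hinv hr
  have hsmooth : ContDiffAt ℝ (⊤ : ℕ∞) (radialLength ρ) (gInv r) :=
    hρ.contDiffOn_radialLength.contDiffAt (Ioi_mem_nhds hs)
  have hstrict : HasStrictDerivAt (radialLength ρ) (√(ρ (gInv r))) (gInv r) :=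
    hsmooth.hasStrictDerivAt' (hρ.hasDerivAt_radialLength hs) (by simp)
  have hleft := hstrict.to_local_left_inverse (Real.sqrt_pos.2 (hρ.pos hs)).ne'
    (hρ.eventually_radialInverse_radialLength hbij hinv hr)
  rw [hinv.2 hr.le] at hleft
  exact hleft.hasDerivAt

theorem contDiffOn_radialInverse : ContDiffOn ℝ (⊤ : ℕ∞) gInv (Ioi 0) := by
  intro r hr
  have hs := hρ.radialInverse_pos hbij hinv hr
  have hderiv : deriv (radialLength ρ) (gInv r) ≠ 0 := by
    rw [(hρ.hasDerivAt_radialLength hs).deriv]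
    exact (Real.sqrt_pos.2 (hρ.pos hs)).ne'
  have hsmooth := contDiffAt_of_local_left_inverse
    (hρ.contDiffOn_radialLength.contDiffAt (Ioi_mem_nhds hs)) (by simp) hderiv
    (hρ.eventually_radialInverse_radialLength hbij hinv hr)
  rw [hinv.2 (mem_Ioi.1 hr).le] at hsmooth
  exact hsmooth.contDiffWithinAt

theorem deriv_warpingProfile_comp_radialInverse (a : ℝ) {r : ℝ} (hr : 0 < r) :
    deriv (warpingProfile ρ a ∘ gInv) r =
      deriv (warpingProfile ρ a) (gInv r) / √(ρ (gInv r)) := by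
  have hs := hρ.radialInverse_pos hbij hinv hr
  have hφ := hasDerivAt_warpingProfile a (hρ.pos hs).ne' (hρ.differentiableAt hs)
  rw [(hφ.comp r (hρ.hasDerivAt_radialInverse hbij hinv hr)).deriv, hφ.deriv, ← div_eq_mul_inv]

theorem classA_warpingProfile_comp_radialInverse (a : ℝ) :
    classA (warpingProfile ρ a ∘ gInv) := by
  have hpos : ∀ r > 0, 0 < gInv r := fun r hr => hρ.radialInverse_pos hbij hinv hr
  have hgInv := hρ.tendsto_radialInverse_zero hbij hinv
  refine classA_of_tendsto ?_ ?_ ?_ ?_ fun r hr => warpingProfile_pos a (hpos r hr)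
    (hρ.pos (hpos r hr))
  · exact (hρ.contDiffOn_warpingProfile a).comp (hρ.contDiffOn_radialInverse hbij hinv) hpos
  · simp [warpingProfile, hρ.radialInverse_zero hbij hinv]
  · exact (tendsto_warpingProfile_zero a hρ.tendsto_one).comp hgInv
  · have hlim := ((hρ.tendsto_deriv_warpingProfile a).div hρ.tendsto_sqrt one_ne_zero).comp hgInv
    rw [div_one] at hlim
    refine hlim.congr' ?_
    filter_upwards [self_mem_nhdsWithin] with r hr
    exact (hρ.deriv_warpingProfile_comp_radialInverse hbij hinv a hr).symm

end Inverse

end classB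

section Asymptotics

/-- The weight `c² / (s² h(c log s)²)` to which `ρ` is asymptotic; `c = (n - 2) / (n - 1)`. -/
noncomputable def modelWeight (h : ℝ → ℝ) (c s : ℝ) : ℝ := c ^ 2 / (s ^ 2 * h (c * Real.log s) ^ 2)

/-- The shift of the argument of `h` in the scaling property (ii), with `k = 1 / (n - 1)` and
`c = (n - 2) / (n - 1)`. -/
noncomputable def scalingShift (h : ℝ → ℝ) (k c τ : ℝ) : ℝ := k * Real.log (h τ / c)

variable {h ρ : ℝ → ℝ} {k c : ℝ}

theorem mul_log_add_mul_log_inv {τ : ℝ} (hτ : 0 < h τ) (hc : c ≠ 0) :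
    k * Real.log (h τ) + k * Real.log c⁻¹ = scalingShift h k c τ := by
  rw [scalingShift, Real.log_div hτ.ne' hc, Real.log_inv]
  ring

theorem hasDerivAt_scalingShift (hh : Differentiable ℝ h) (hpos : ∀ τ, 0 < h τ) (hc : c ≠ 0)
    (τ : ℝ) : HasDerivAt (scalingShift h k c) (k * (deriv h τ / h τ)) τ := by
  refine ((((hh τ).hasDerivAt.div_const c).log
    (div_ne_zero (hpos τ).ne' hc)).const_mul k).congr_deriv ?_
  rw [div_div_div_cancel_right₀ hc]

theorem scalingShift_sub_scalingShift (hpos : ∀ τ, 0 < h τ) (hc : c ≠ 0) (σ τ : ℝ) :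
    scalingShift h k c σ - scalingShift h k c τ = k * Real.log (h σ / h τ) := by
  rw [scalingShift, scalingShift, ← mul_sub, ← Real.log_div (div_ne_zero (hpos σ).ne' hc)
    (div_ne_zero (hpos τ).ne' hc), div_div_div_cancel_right₀ hc]

theorem tendsto_deriv_scalingShift (hh : Differentiable ℝ h) (hpos : ∀ τ, 0 < h τ) (hc : c ≠ 0)
    (hlogDeriv : Tendsto (fun τ => deriv h τ / h τ) atTop (𝓝 0)) :
    Tendsto (deriv (scalingShift h k c)) atTop (𝓝 0) := by
  have hderiv : deriv (scalingShift h k c) = fun τ => k * (deriv h τ / h τ) :=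
    funext fun τ => (hasDerivAt_scalingShift hh hpos hc τ).deriv
  rw [hderiv]
  simpa only [mul_zero] using hlogDeriv.const_mul k

theorem tendsto_scalingShift_sub_of_tendsto_div (hpos : ∀ τ, 0 < h τ) (hc : c ≠ 0)
    (hshift : Tendsto (fun τ => h (τ + scalingShift h k c τ) / h τ) atTop (𝓝 1)) :
    Tendsto (fun τ => scalingShift h k c (τ + scalingShift h k c τ) - scalingShift h k c τ)
      atTop (𝓝 0) := by
  simp only [scalingShift_sub_scalingShift hpos hc]
  simpa only [Real.log_one, mul_zero] using (hshift.log one_ne_zero).const_mul k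

theorem tendsto_div_of_tendsto_scalingShift_sub {ι : Type*} {l : Filter ι} {t u : ι → ℝ}
    (hpos : ∀ τ, 0 < h τ) (hc : c ≠ 0) (hk : k ≠ 0)
    (hsub : Tendsto (fun i => scalingShift h k c (u i) - scalingShift h k c (t i)) l (𝓝 0)) :
    Tendsto (fun i => h (u i) / h (t i)) l (𝓝 1) := by
  have hexp := ((hsub.const_mul k⁻¹).rexp)
  rw [mul_zero, Real.exp_zero] at hexp
  refine hexp.congr fun i => ?_
  rw [scalingShift_sub_scalingShift hpos hc, inv_mul_cancel_left₀ hk,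
    Real.exp_log (div_pos (hpos _) (hpos _))]

theorem half_mul_log_modelWeight (hpos : ∀ τ, 0 < h τ) (hc : 0 < c) {s : ℝ} (hs : 0 < s) :
    k / 2 * Real.log (modelWeight h c s) =
      -(k * Real.log s) - scalingShift h k c (c * Real.log s) := by
  have ht := hpos (c * Real.log s)
  rw [modelWeight, scalingShift, ← mul_pow, ← div_pow, Real.log_pow,
    Real.log_div hc.ne' (by positivity), Real.log_mul hs.ne' ht.ne', Real.log_div ht.ne' hc.ne']
  push_cast
  ring

theorem tendsto_mul_sqrt_mul (hpos : ∀ τ, 0 < h τ) (hc : 0 < c)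
    (hρ : Tendsto (fun s => ρ s / modelWeight h c s) atTop (𝓝 1)) :
    Tendsto (fun s => s * √(ρ s) * h (c * Real.log s)) atTop (𝓝 c) := by
  have hlim := hρ.sqrt.const_mul c
  rw [Real.sqrt_one, mul_one] at hlim
  refine hlim.congr' ?_
  filter_upwards [eventually_gt_atTop 0] with s hs
  have ht := hpos (c * Real.log s)
  have hmodel : √(modelWeight h c s) = c / (s * h (c * Real.log s)) := by
    rw [modelWeight, ← mul_pow, ← div_pow, Real.sqrt_sq (by positivity)]
  rw [Real.sqrt_div' _ (by unfold modelWeight; positivity), hmodel]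
  field_simp

theorem tendsto_radialLength_atTop (hB : classB ρ) (hh : Continuous h) (hpos : ∀ τ, 0 < h τ)
    (hc : 0 < c) (hint : ¬ IntegrableOn (fun τ => 1 / h τ) (Ioi 1))
    (hρ : Tendsto (fun s => ρ s / modelWeight h c s) atTop (𝓝 1)) :
    Tendsto (radialLength ρ) atTop atTop := by
  set F : ℝ → ℝ := fun τ => radialLength ρ (Real.exp (τ / c)) with hF
  have hexp : Tendsto (fun τ : ℝ => Real.exp (τ / c)) atTop atTop :=
    Real.tendsto_exp_atTop.comp (tendsto_id.atTop_div_const hc)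
  have hderiv (τ : ℝ) :
      HasDerivAt F (√(ρ (Real.exp (τ / c))) * (Real.exp (τ / c) * (1 / c))) τ :=
    HasDerivAt.comp (h := fun σ => Real.exp (σ / c)) τ
      (hB.hasDerivAt_radialLength (Real.exp_pos _)) ((hasDerivAt_id' τ).div_const c).exp
  have hmono : Monotone F := fun τ σ hτσ =>
    hB.strictMonoOn_radialLength.monotoneOn (Real.exp_pos _).le (Real.exp_pos _).le (by gcongr)
  have hratio : Tendsto (fun τ => deriv F τ / (1 / h τ)) atTop (𝓝 1) := by
    have hlim := ((tendsto_mul_sqrt_mul hpos hc hρ).comp hexp).div_const c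
    rw [div_self hc.ne'] at hlim
    refine hlim.congr fun τ => ?_
    simp only [Function.comp_apply, Real.log_exp, mul_div_cancel₀ _ hc.ne', (hderiv τ).deriv]
    field_simp
  have hequiv : deriv F ~[atTop] fun τ => 1 / h τ :=
    (isEquivalent_iff_tendsto_one (.of_forall fun τ => (one_div_pos.2 (hpos τ)).ne')).2 hratio
  have hcont : Continuous fun τ => 1 / h τ := continuous_const.div hh fun τ => (hpos τ).ne'
  have htop : Tendsto F atTop atTop := tendsto_atTop_of_monotone_of_not_integrableAtFilter hmono
    (.of_forall fun τ => (hderiv τ).differentiableAt) hequiv.isBigO_symm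
    (hcont.stronglyMeasurableAtFilter _ _) (not_integrableAtFilter_atTop_of_continuous hcont hint)
  refine (htop.comp (Real.tendsto_log_atTop.const_mul_atTop hc)).congr' ?_
  filter_upwards [eventually_gt_atTop 0] with s hs
  rw [hF, Function.comp_apply, mul_div_cancel_left₀ _ hc.ne', Real.exp_log hs]

theorem tendsto_log_warpingProfile_sub (hpos : ∀ τ, 0 < h τ) (hρpos : ∀ s > 0, 0 < ρ s)
    (hk : k < 1)
    (hρ : Tendsto (fun s => ρ s / modelWeight h (1 - k) s) atTop (𝓝 1)) :
    Tendsto (fun s => Real.log (warpingProfile ρ (k / 2) s) -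
      ((1 - k) * Real.log s - scalingShift h k (1 - k) ((1 - k) * Real.log s))) atTop (𝓝 0) := by
  have hc : 0 < 1 - k := sub_pos.2 hk
  have hlim := (hρ.log one_ne_zero).const_mul (k / 2)
  rw [Real.log_one, mul_zero] at hlim
  refine hlim.congr' ?_
  filter_upwards [eventually_gt_atTop 0] with s hs
  have ht := hpos ((1 - k) * Real.log s)
  have hmodel : modelWeight h (1 - k) s ≠ 0 := by unfold modelWeight; positivity
  rw [Real.log_div (hρpos s hs).ne' hmodel, mul_sub, half_mul_log_modelWeight hpos hc hs,
    log_warpingProfile _ hs (hρpos s hs)]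
  ring

theorem tendsto_log_warpingProfile_and_div (hh : Differentiable ℝ h) (hpos : ∀ τ, 0 < h τ)
    (hk₀ : k ≠ 0) (hk : k < 1) (hlogDeriv : Tendsto (fun τ => deriv h τ / h τ) atTop (𝓝 0))
    (hshift : Tendsto (fun τ => h (τ + scalingShift h k (1 - k) τ) / h τ) atTop (𝓝 1))
    (hρpos : ∀ s > 0, 0 < ρ s)
    (hρ : Tendsto (fun s => ρ s / modelWeight h (1 - k) s) atTop (𝓝 1)) :
    Tendsto (fun s => Real.log (warpingProfile ρ (k / 2) s)) atTop atTop ∧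
      Tendsto (fun s => h (Real.log (warpingProfile ρ (k / 2) s)) / h ((1 - k) * Real.log s))
        atTop (𝓝 1) := by
  have hc : 0 < 1 - k := sub_pos.2 hk
  have hdiff : Differentiable ℝ (scalingShift h k (1 - k)) := fun τ =>
    (hasDerivAt_scalingShift hh hpos hc.ne' τ).differentiableAt
  obtain ⟨hlog, hsub⟩ := tendsto_comp_sub_comp_of_tendsto_sub_sub_self hdiff
    (tendsto_deriv_scalingShift hh hpos hc.ne' hlogDeriv)
    (tendsto_scalingShift_sub_of_tendsto_div hpos hc.ne' hshift)
    (Real.tendsto_log_atTop.const_mul_atTop hc) (tendsto_log_warpingProfile_sub hpos hρpos hk hρ)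
  exact ⟨hlog, tendsto_div_of_tendsto_scalingShift_sub hpos hc.ne' hk₀ hsub⟩

theorem tendsto_mul_deriv_warpingProfile_div (hB : classB ρ) (a : ℝ) {m : ℝ}
    (hρ : Tendsto (fun s => s * deriv ρ s / ρ s) atTop (𝓝 m)) :
    Tendsto (fun s => s * deriv (warpingProfile ρ a) s / warpingProfile ρ a s) atTop
      (𝓝 (1 + a * m)) := by
  refine ((hρ.const_mul a).const_add 1).congr' ?_
  filter_upwards [eventually_gt_atTop 0] with s hs
  have hrpow := Real.rpow_pos_of_pos (hB.pos hs) a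
  rw [hB.deriv_warpingProfile a hs, warpingProfile]
  field_simp

/- The quotient is `(s φ' / φ) / (s √ρ h(t))` times `h(t) / h(log φ)` with `t = c log s`,
and the first two limits are both equal to `c = 1 - k`. -/
theorem tendsto_deriv_warpingProfile_div (hB : classB ρ) (hpos : ∀ τ, 0 < h τ) (hk : k < 1)
    (hρ : Tendsto (fun s => ρ s / modelWeight h (1 - k) s) atTop (𝓝 1))
    (hρ' : Tendsto (fun s => s * deriv ρ s / ρ s) atTop (𝓝 (-2)))
    (hdiv : Tendsto (fun s => h (Real.log (warpingProfile ρ (k / 2) s)) / h ((1 - k) * Real.log s))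
        atTop (𝓝 1)) :
    Tendsto (fun s => deriv (warpingProfile ρ (k / 2)) s / √(ρ s) / warpingProfile ρ (k / 2) s /
      h (Real.log (warpingProfile ρ (k / 2) s))) atTop (𝓝 1) := by
  have hc : 0 < 1 - k := sub_pos.2 hk
  have hlim := ((tendsto_mul_deriv_warpingProfile_div hB (k / 2) hρ').div
    (tendsto_mul_sqrt_mul hpos hc hρ) hc.ne').div hdiv one_ne_zero
  rw [show 1 + k / 2 * -2 = 1 - k by ring, div_self hc.ne', div_one] at hlim
  refine hlim.congr' ?_
  filter_upwards [eventually_gt_atTop 0] with s hs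
  have hsqrt := Real.sqrt_pos.2 (hB.pos hs)
  have hφ := warpingProfile_pos (k / 2) hs (hB.pos hs)
  have ht := hpos ((1 - k) * Real.log s)
  have hu := hpos (Real.log (warpingProfile ρ (k / 2) s))
  simp only [Pi.div_apply]
  field_simp

theorem tendsto_deriv_comp_radialInverse_div {gInv : ℝ → ℝ} {a L : ℝ} (hB : classB ρ)
    (hbij : BijOn (radialLength ρ) (Ici 0) (Ici 0))
    (hinv : InvOn gInv (radialLength ρ) (Ici 0) (Ici 0))
    (hlim : Tendsto (fun s => deriv (warpingProfile ρ a) s / √(ρ s) / warpingProfile ρ a s /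
      h (Real.log (warpingProfile ρ a s))) atTop (𝓝 L)) :
    Tendsto (fun r => deriv (warpingProfile ρ a ∘ gInv) r / (warpingProfile ρ a ∘ gInv) r /
      h (Real.log ((warpingProfile ρ a ∘ gInv) r))) atTop (𝓝 L) := by
  refine (hlim.comp (hB.tendsto_radialInverse_atTop hbij hinv)).congr' ?_
  filter_upwards [eventually_gt_atTop 0] with r hr
  rw [hB.deriv_warpingProfile_comp_radialInverse hbij hinv a hr]
  rfl

end Asymptotics

theorem stmt_8_general
    (d : ℝ) (hd : 2 < d)
    (h : ℝ → ℝ) (hh : Differentiable ℝ h) (hhpos : ∀ τ : ℝ, 0 < h τ)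
    (hi : Tendsto (fun τ => deriv h τ / h τ) atTop (𝓝 0))
    (hii : Tendsto (fun τ =>
      h (τ + 1 / (d - 1) * Real.log (h τ) + 1 / (d - 1) * Real.log ((d - 1) / (d - 2))) / h τ)
      atTop (𝓝 1))
    (hiiint : ¬ IntegrableOn (fun τ => 1 / h τ) (Ioi 1))
    (ρ : ℝ → ℝ) (hρB : classB ρ)
    (hρderiv : Tendsto (fun s => s * deriv ρ s / ρ s) atTop (𝓝 (-2)))
    (hρasymp : Tendsto (fun s =>
      ρ s / (((d - 2) / (d - 1)) ^ 2 / (s ^ 2 * h ((d - 2) / (d - 1) * Real.log s) ^ 2)))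
      atTop (𝓝 1))
    (g : ℝ → ℝ) (hg : ∀ s : ℝ, g s = ∫ τ in (0 : ℝ)..s, √(ρ τ)) :
    StrictMonoOn g (Ici 0) ∧ BijOn g (Ici 0) (Ici 0) ∧
    ∃ gInv : ℝ → ℝ, (∀ s : ℝ, 0 ≤ s → gInv (g s) = s) ∧ (∀ r : ℝ, 0 ≤ r → g (gInv r) = r) ∧
      ∀ ψ : ℝ → ℝ, (∀ r : ℝ, ψ r = gInv r * ρ (gInv r) ^ (1 / (2 * (d - 1)))) →
        classA ψ ∧ Tendsto ψ atTop atTop ∧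
        Tendsto (fun r => deriv ψ r / ψ r / h (Real.log (ψ r))) atTop (𝓝 1) := by
  obtain rfl : g = radialLength ρ := funext hg
  obtain ⟨k, hk⟩ : ∃ k, k = 1 / (d - 1) := ⟨_, rfl⟩
  have hd₁ : 0 < d - 1 := by linarith
  have hk₀ : k ≠ 0 := hk ▸ (one_div_pos.2 hd₁).ne'
  have hk₁ : k < 1 := by rw [hk, div_lt_one hd₁]; linarith
  have hc : (d - 2) / (d - 1) = 1 - k := by rw [hk]; field_simp; ring
  have ha : 1 / (2 * (d - 1)) = k / 2 := by rw [hk]; field_simp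
  have hshift (τ : ℝ) := mul_log_add_mul_log_inv (k := k) (hhpos τ) (sub_pos.2 hk₁).ne'
  simp only [← inv_div (d - 2) (d - 1), hc, ← hk, add_assoc, hshift] at hii
  rw [hc] at hρasymp
  rw [ha]
  have hbij := hρB.bijOn_radialLength
    (tendsto_radialLength_atTop hρB hh.continuous hhpos (sub_pos.2 hk₁) hiiint hρasymp)
  have hinv := hbij.invOn_invFunOn
  obtain ⟨hlog, hdiv⟩ := tendsto_log_warpingProfile_and_div hh hhpos hk₀ hk₁ hi hii
    (fun s hs => hρB.pos hs) hρasymp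
  refine ⟨hρB.strictMonoOn_radialLength, hbij, _, hinv.1, hinv.2, fun ψ hψ => ?_⟩
  obtain rfl : ψ = warpingProfile ρ (k / 2) ∘ _ := funext hψ
  exact ⟨hρB.classA_warpingProfile_comp_radialInverse hbij hinv _,
    (hρB.tendsto_warpingProfile_atTop hlog).comp (hρB.tendsto_radialInverse_atTop hbij hinv),
    tendsto_deriv_comp_radialInverse_div hρB hbij hinv
      (tendsto_deriv_warpingProfile_div hρB hhpos hk₁ hρasymp hρderiv hdiv)⟩

/-- Theorem 7.1 of the paper, inverse part. For `n ≥ 3`, given a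
positive `h ∈ C¹(ℝ)` with `h'/h → 0`, the scaling-invariance property (ii) and
`∫₁^∞ dτ/h(τ) = +∞`, and a weight `ρ ∈ ℬ` with `s ρ'(s)/ρ(s) → -2` and
`ρ(s) ∼ ((n-2)/(n-1))²/(s² h(((n-2)/(n-1)) log s)²)`, the map
`g(s) = ∫₀^s ρ(τ)^{1/2} dτ` is an increasing bijection of `[0,∞)` onto itself and the
model function `ψ(r) = g⁻¹(r) ρ(g⁻¹(r))^{1/(2(n-1))}` belongs to `𝒜`, tends to `+∞`,
and satisfies `(log ψ)'(r)/h(log ψ(r)) → 1`. -/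
theorem stmt_8
    (n : ℕ) (hn : 3 ≤ n)
    (h : ℝ → ℝ) (hh1 : ContDiff ℝ 1 h) (hhpos : ∀ τ : ℝ, 0 < h τ)
    (hi : Filter.Tendsto (fun τ => deriv h τ / h τ) Filter.atTop (nhds 0))
    (hii : ∀ ε : ℝ → ℝ, Filter.Tendsto ε Filter.atTop (nhds 0) →
      Filter.Tendsto (fun τ =>
          h (τ + (1 / ((n : ℝ) - 1)) * Real.log (h τ)
              + (1 / ((n : ℝ) - 1)) * Real.log (((n : ℝ) - 1) / ((n : ℝ) - 2)) + ε τ)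
            / h τ)
        Filter.atTop (nhds 1))
    (hiiint : ¬ MeasureTheory.IntegrableOn (fun τ => 1 / h τ) (Set.Ioi 1))
    (ρ : ℝ → ℝ) (hρB : classB ρ)
    (hρderiv : Filter.Tendsto (fun s => s * deriv ρ s / ρ s) Filter.atTop (nhds (-2)))
    (hρasymp : Filter.Tendsto (fun s =>
        ρ s / ((((n : ℝ) - 2) / ((n : ℝ) - 1)) ^ 2 /
          (s ^ 2 * (h (((n : ℝ) - 2) / ((n : ℝ) - 1) * Real.log s)) ^ 2)))
      Filter.atTop (nhds 1))
    (g : ℝ → ℝ) (hg : ∀ s : ℝ, g s = ∫ τ in (0 : ℝ)..s, Real.sqrt (ρ τ)) :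
    StrictMonoOn g (Set.Ici 0) ∧
    Set.BijOn g (Set.Ici 0) (Set.Ici 0) ∧
    ∃ gInv : ℝ → ℝ,
      (∀ s : ℝ, 0 ≤ s → gInv (g s) = s) ∧
      (∀ r : ℝ, 0 ≤ r → g (gInv r) = r) ∧
      ∀ ψ : ℝ → ℝ,
        (∀ r : ℝ, ψ r = gInv r * ρ (gInv r) ^ (1 / (2 * ((n : ℝ) - 1)))) →
        classA ψ ∧
        Filter.Tendsto ψ Filter.atTop Filter.atTop ∧
        Filter.Tendsto (fun r => (deriv ψ r / ψ r) / h (Real.log (ψ r)))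
          Filter.atTop (nhds 1) :=
  stmt_8_general n (by exact_mod_cast hn) h (hh1.differentiable one_ne_zero) hhpos hi
    (by simpa only [add_zero] using hii (fun _ => 0) tendsto_const_nhds) hiiint ρ hρB hρderiv
    hρasymp g hg
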